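/- Let (X, μ) be a standard Borel probability space and let T be an invertible measure-preserving transformation of (X, μ) with purely discrete spectrum (the eigenfunctions of the Koopman operator U_T f = f ∘ T span a dense subspace of L²(X, μ)). Then for every admissible summable semimetric ρ on X, the orbit {ρ_n : n ∈ ℕ}, where ρ_n(x,y) = ρ(T^n x, T^n y), is precompact in L¹(X×X, μ×μ), and hence also precompact in the m-norm; moreover, for every ε>0 the ε-entropies of all finite convex combinations of semimetrics in this orbit are uniformly bounded. -/

import Mathlib

open MeasureTheory Filter Function Set
open scoped ENNReal

/-- A semimetric on `X`: a nonnegative function vanishing on the diagonal, symmetric and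
satisfying the triangle inequality for all points. -/
def IsSemimetric {X : Type*} (ρ : X → X → ℝ) : Prop :=
  (∀ x y, 0 ≤ ρ x y) ∧ (∀ x, ρ x x = 0) ∧ (∀ x y, ρ x y = ρ y x) ∧
    ∀ x y z, ρ x z ≤ ρ x y + ρ y z

/-- A metric on `X`: a semimetric that separates points. -/
def IsMetricFun {X : Type*} (ρ : X → X → ℝ) : Prop :=
  IsSemimetric ρ ∧ ∀ x y, ρ x y = 0 ↔ x = y

/-- The semimetric space `(S, ρ)` is separable. -/
def SeparableOn {X : Type*} (ρ : X → X → ℝ) (S : Set X) : Prop :=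
  ∃ D : Set X, D ⊆ S ∧ D.Countable ∧ ∀ x ∈ S, ∀ ε : ℝ, 0 < ε → ∃ y ∈ D, ρ x y < ε

/-- A semimetric is admissible for `(X, μ)` if it is measurable on `(X × X, μ × μ)` and
separable on a subset of full measure. -/
def Admissible {X : Type*} [MeasurableSpace X] (μ : Measure X) (ρ : X → X → ℝ) : Prop :=
  Measurable (Function.uncurry ρ) ∧
    ∃ S : Set X, MeasurableSet S ∧ μ Sᶜ = 0 ∧ SeparableOn ρ S

/-- An `ε`-cover of size `k`: `X = X₀ ∪ X₁ ∪ ⋯ ∪ X_k` with `μ(X₀) < ε` and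
`diam_ρ(X_j) < ε` for `j = 1, …, k`. -/
def IsEpsCover {X : Type*} [MeasurableSpace X] (μ : Measure X) (ρ : X → X → ℝ)
    (ε : ℝ) (k : ℕ) : Prop :=
  ∃ A : Fin (k + 1) → Set X, (∀ i, MeasurableSet (A i)) ∧ (⋃ i, A i) = Set.univ ∧
    μ (A 0) < ENNReal.ofReal ε ∧
    ∀ i, i ≠ 0 → ∀ x ∈ A i, ∀ y ∈ A i, ρ x y < ε

/-- The `ε`-entropy of `(X, μ, ρ)`: the binary logarithm of the smallest size of an
`ε`-cover, and `∞` if there is no finite `ε`-cover. -/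
noncomputable def epsEntropy {X : Type*} [MeasurableSpace X] (μ : Measure X)
    (ρ : X → X → ℝ) (ε : ℝ) : ℝ≥0∞ :=
  sInf {h : ℝ≥0∞ | ∃ k : ℕ, IsEpsCover μ ρ ε k ∧ h = ENNReal.ofReal (Real.logb 2 k)}

/-- The m-norm of `f`: the infimum of the `L¹`-norms of measurable semimetrics
dominating `|f|` almost everywhere (`∞` if there is no such semimetric). -/
noncomputable def mnorm {X : Type*} [MeasurableSpace X] (μ : Measure X)
    (f : X → X → ℝ) : ℝ≥0∞ :=
  sInf {c : ℝ≥0∞ | ∃ ρ : X → X → ℝ, IsSemimetric ρ ∧ Measurable (Function.uncurry ρ) ∧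
    (∀ᵐ p ∂(μ.prod μ), |f p.1 p.2| ≤ ρ p.1 p.2) ∧
    c = ∫⁻ p, ENNReal.ofReal (ρ p.1 p.2) ∂(μ.prod μ)}

/-- The m-distance between two functions. -/
noncomputable def mdist {X : Type*} [MeasurableSpace X] (μ : Measure X)
    (f g : X → X → ℝ) : ℝ≥0∞ :=
  mnorm μ fun x y => f x y - g x y

/-- The `L¹(X × X, μ × μ)` distance between two functions. -/
noncomputable def L1dist {X : Type*} [MeasurableSpace X] (μ : Measure X)
    (f g : X → X → ℝ) : ℝ≥0∞ :=
  ∫⁻ p, ENNReal.ofReal |f p.1 p.2 - g p.1 p.2| ∂(μ.prod μ)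

/-- Total boundedness (precompactness) of a set of functions w.r.t. an extended distance. -/
def TotallyBoundedIn {X : Type*} (d : (X → X → ℝ) → (X → X → ℝ) → ℝ≥0∞)
    (M : Set (X → X → ℝ)) : Prop :=
  ∀ ε : ℝ≥0∞, 0 < ε → ∃ T : Set (X → X → ℝ), T.Finite ∧ ∀ f ∈ M, ∃ g ∈ T, d f g < ε

/-- A family of extended distances on `ℕ` for which, for every `ε > 0`, the index set splits into
finitely many classes of diameter less than `ε`. -/
def FinColorable (d : ℕ → ℕ → ℝ≥0∞) : Prop :=
  ∀ ε : ℝ≥0∞, 0 < ε → ∃ c : ℕ → ℕ, (range c).Finite ∧ ∀ n m, c n = c m → d n m < ε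

namespace FinColorable

variable {d d₁ d₂ : ℕ → ℕ → ℝ≥0∞}

lemma of_eq_zero (h : ∀ n m, d n m = 0) : FinColorable d := fun ε hε =>
  ⟨fun _ => 0, (finite_singleton 0).subset (by rintro _ ⟨_, rfl⟩; rfl), fun n m _ => by
    rw [h]; exact hε⟩

lemma of_control (h₁ : FinColorable d₁)
    (h : ∀ ε : ℝ≥0∞, 0 < ε → ∃ δ : ℝ≥0∞, 0 < δ ∧ ∀ n m, d₁ n m < δ → d n m < ε) :
    FinColorable d := fun ε hε => by
  obtain ⟨δ, hδ, hd⟩ := h ε hε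
  obtain ⟨c, hc, hcd⟩ := h₁ δ hδ
  exact ⟨c, hc, fun n m hnm => hd n m (hcd n m hnm)⟩

lemma mono (h₁ : FinColorable d₁) (h : ∀ n m, d n m ≤ d₁ n m) : FinColorable d :=
  h₁.of_control fun ε hε => ⟨ε, hε, fun n m => (h n m).trans_lt⟩

lemma of_le_mul (h₁ : FinColorable d₁) {K : ℝ≥0∞} (hK : K ≠ ∞)
    (h : ∀ n m, d n m ≤ d₁ n m * K) : FinColorable d :=
  h₁.of_control fun ε hε => by
    obtain ⟨δ, hδ, hlt⟩ := ENNReal.exists_nnreal_pos_mul_lt hK hε.ne'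
    exact ⟨δ, by exact_mod_cast hδ, fun n m hnm =>
      ((h n m).trans (by gcongr)).trans_lt hlt⟩

lemma of_le_add (h₁ : FinColorable d₁) (h₂ : FinColorable d₂)
    (h : ∀ n m, d n m ≤ d₁ n m + d₂ n m) : FinColorable d := fun ε hε => by
  obtain ⟨c₁, hc₁, hd₁⟩ := h₁ (ε / 2) (ENNReal.half_pos hε.ne')
  obtain ⟨c₂, hc₂, hd₂⟩ := h₂ (ε / 2) (ENNReal.half_pos hε.ne')
  refine ⟨fun n => Nat.pair (c₁ n) (c₂ n), ?_, fun n m hnm => ?_⟩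
  · refine ((hc₁.prod hc₂).image fun p => Nat.pair p.1 p.2).subset ?_
    rintro _ ⟨n, rfl⟩
    exact ⟨(c₁ n, c₂ n), ⟨mem_range_self n, mem_range_self n⟩, rfl⟩
  · obtain ⟨e₁, e₂⟩ := Nat.pair_eq_pair.1 hnm
    calc d n m ≤ d₁ n m + d₂ n m := h n m
      _ < ε / 2 + ε / 2 := ENNReal.add_lt_add (hd₁ n m e₁) (hd₂ n m e₂)
      _ = ε := ENNReal.add_halves ε

lemma of_approx (h : ∀ ε : ℝ≥0∞, 0 < ε →
    ∃ d₁, FinColorable d₁ ∧ ∀ n m, d n m ≤ d₁ n m + ε) : FinColorable d := fun ε hε => by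
  obtain ⟨δ, hδ0, hδ⟩ := exists_between (ENNReal.half_pos hε.ne')
  obtain ⟨d₁, h₁, hd₁⟩ := h δ hδ0
  obtain ⟨c, hc, hd⟩ := h₁ (ε / 2) (ENNReal.half_pos hε.ne')
  refine ⟨c, hc, fun n m hnm => ?_⟩
  calc d n m ≤ d₁ n m + δ := hd₁ n m
    _ < ε / 2 + ε / 2 := ENNReal.add_lt_add (hd n m hnm) hδ
    _ = ε := ENNReal.add_halves ε

/-- A set of representatives of the classes. -/
lemma exists_rep {c : ℕ → ℕ} (hc : (range c).Finite) :
    ∃ (s : Finset ℕ) (r : ℕ → ℕ), ∀ n, r n ∈ s ∧ c (r n) = c n := by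
  have hr : ∀ n, c (invFun c (c n)) = c n := fun n => invFun_eq ⟨n, rfl⟩
  refine ⟨(hc.image (invFun c)).toFinset, fun n => invFun c (c n), fun n => ⟨?_, hr n⟩⟩
  simp only [Finite.mem_toFinset]
  exact ⟨c n, mem_range_self n, rfl⟩

end FinColorable

lemma TotallyBounded.finColorable {E : Type*} [PseudoEMetricSpace E] {u : ℕ → E} {K : Set E}
    (h : TotallyBounded K) (hu : ∀ n, u n ∈ K) : FinColorable fun n m => edist (u n) (u m) := by
  intro ε hε
  obtain ⟨t, ht, htu⟩ := EMetric.totallyBounded_iff.1 h (ε / 2) (ENNReal.half_pos hε.ne')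
  have : ∀ n, ∃ y ∈ t, edist (u n) y < ε / 2 := fun n => by
    simpa using htu (hu n)
  choose y hyt hy using this
  have := ht.countable.toEncodable
  refine ⟨fun n => Encodable.encode (⟨y n, hyt n⟩ : t), ?_, fun n m hnm => ?_⟩
  · have := ht.to_subtype
    exact (finite_range (Encodable.encode : t → ℕ)).subset
      (by rintro _ ⟨n, rfl⟩; exact mem_range_self _)
  · have e : y n = y m := congrArg Subtype.val (Encodable.encode_injective hnm)
    calc edist (u n) (u m) ≤ edist (u n) (y n) + edist (u m) (y m) := by
          rw [e]; exact edist_triangle_right _ _ _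
      _ < ε / 2 + ε / 2 := ENNReal.add_lt_add (hy n) (hy m)
      _ = ε := ENNReal.add_halves ε

section Orbit

variable {𝕜 E : Type*} [NormedField 𝕜] [NormedAddCommGroup E] [NormedSpace 𝕜 E]
  (U : ℕ → E →ₗᵢ[𝕜] E)

/-- The orbit of `f` under the isometries `U n` is precompact. -/
def PrecompactOrbit (f : E) : Prop := FinColorable fun n m => edist (U n f) (U m f)

variable {U}

lemma PrecompactOrbit.add {f g : E} (hf : PrecompactOrbit U f) (hg : PrecompactOrbit U g) :
    PrecompactOrbit U (f + g) :=
  FinColorable.of_le_add hf hg fun n m => by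
    simp only [map_add]; exact edist_add_add_le _ _ _ _

lemma PrecompactOrbit.smul {f : E} (hf : PrecompactOrbit U f) (c : 𝕜) :
    PrecompactOrbit U (c • f) :=
  FinColorable.of_le_mul hf (K := ‖c‖ₑ) (by simp) fun n m => by
    simp only [map_smul, edist_eq_enorm_sub, ← smul_sub, enorm_smul, mul_comm]; rfl

lemma isClosed_precompactOrbit : IsClosed {f : E | PrecompactOrbit U f} := by
  refine isClosed_of_closure_subset fun f hf => FinColorable.of_approx fun ε hε => ?_
  obtain ⟨g, hg, hfg⟩ := EMetric.mem_closure_iff.1 hf (ε / 2) (ENNReal.half_pos hε.ne')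
  refine ⟨_, hg, fun n m => ?_⟩
  calc edist (U n f) (U m f)
      ≤ edist (U n f) (U n g) + edist (U n g) (U m g) + edist (U m g) (U m f) :=
        edist_triangle4 _ _ _ _
    _ = edist f g + edist (U n g) (U m g) + edist g f := by
        rw [(U n).isometry.edist_eq, (U m).isometry.edist_eq]
    _ ≤ ε / 2 + edist (U n g) (U m g) + ε / 2 := by
        rw [edist_comm g f]; gcongr
    _ = edist (U n g) (U m g) + ε := by
        nth_rw 3 [← ENNReal.add_halves ε]; ring

lemma precompactOrbit_of_dense_span {s : Set E} (hs : Dense (Submodule.span 𝕜 s : Set E))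
    (h : ∀ f ∈ s, PrecompactOrbit U f) (f : E) : PrecompactOrbit U f := by
  refine isClosed_precompactOrbit.closure_subset_iff.2 (fun g hg => ?_) (hs f)
  refine Submodule.span_induction h ?_ (fun _ _ _ _ => .add) (fun c _ _ hx => hx.smul c) hg
  exact FinColorable.of_eq_zero (by simp)

end Orbit

section

variable {X : Type*} [MeasurableSpace X] {μ : Measure X} {T : X → X} {ρ : X → X → ℝ}

lemma precompactOrbit_of_eigenfunction (hT : MeasurePreserving T μ μ) {f : Lp ℂ 2 μ} {c : ℂ}
    (hf : ∀ᵐ x ∂μ, f (T x) = c * f x) :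
    PrecompactOrbit (fun n => Lp.compMeasurePreservingₗᵢ ℂ T^[n] (hT.iterate n)) f := by
  have key : ∀ n, Lp.compMeasurePreservingₗᵢ ℂ T^[n] (hT.iterate n) f = c ^ n • f := by
    intro n
    have h1 : ∀ᵐ x ∂μ, f (T^[n] x) = c ^ n * f x := by
      induction n with
      | zero => simp
      | succ n ih =>
        filter_upwards [ih, (hT.iterate n).quasiMeasurePreserving.ae hf] with x hx hx'
        rw [iterate_succ_apply', hx', hx, pow_succ]; ring
    apply Lp.ext
    filter_upwards [Lp.coeFn_compMeasurePreserving f (hT.iterate n), Lp.coeFn_smul (c ^ n) f, h1]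
      with x h2 h3 h4
    rw [h3]
    simp only [Pi.smul_apply, smul_eq_mul, ← h4]
    exact h2
  by_cases h0 : f = 0
  · subst h0; exact FinColorable.of_eq_zero (by simp)
  have hc : ∀ n, c ^ n ∈ Metric.closedBall (0 : ℂ) 1 := by
    intro n
    have := (Lp.compMeasurePreservingₗᵢ ℂ T^[n] (hT.iterate n)).norm_map f
    rw [key, norm_smul] at this
    simpa using (mul_eq_right₀ (norm_ne_zero_iff.2 h0)).1 this |>.le
  refine ((isCompact_closedBall (0 : ℂ) 1).totallyBounded.finColorable hc).of_le_mul
    (K := ‖f‖ₑ) (by simp) fun n m => ?_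
  rw [key, key, edist_eq_enorm_sub, ← sub_smul, enorm_smul, edist_eq_enorm_sub]

lemma edist_compMeasurePreserving_indicatorConstLp (𝕜 : Type*) [RCLike 𝕜] {Y : Type*}
    [MeasurableSpace Y] {ν : Measure Y} [IsFiniteMeasure ν] {V W : Y → Y}
    (hV : MeasurePreserving V ν ν) (hW : MeasurePreserving W ν ν)
    {A : Set Y} (hA : MeasurableSet A) (c : 𝕜) {p : ℝ≥0∞} [Fact (1 ≤ p)] (hp : p ≠ ∞) :
    edist (Lp.compMeasurePreservingₗᵢ 𝕜 V hV (indicatorConstLp p hA (measure_ne_top ν A) c))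
      (Lp.compMeasurePreservingₗᵢ 𝕜 W hW (indicatorConstLp p hA (measure_ne_top ν A) c)) =
      ‖c‖ₑ * ν (symmDiff (V ⁻¹' A) (W ⁻¹' A)) ^ (1 / p.toReal) := by
  have hp0 : p ≠ 0 := (zero_lt_one.trans_le (Fact.out : 1 ≤ p)).ne'
  change edist (Lp.compMeasurePreserving V hV _) (Lp.compMeasurePreserving W hW _) = _
  rw [Lp.indicatorConstLp_compMeasurePreserving, Lp.indicatorConstLp_compMeasurePreserving,
    edist_indicatorConstLp_eq_enorm, Lp.enorm_def, eLpNorm_congr_ae indicatorConstLp_coeFn,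
    eLpNorm_indicator_const
      ((hA.preimage hV.measurable).symmDiff (hA.preimage hW.measurable)) hp0 hp]

lemma finColorable_symmDiff [IsFiniteMeasure μ] (hT : MeasurePreserving T μ μ)
    (h : ∀ f : Lp ℂ 2 μ,
      PrecompactOrbit (fun n => Lp.compMeasurePreservingₗᵢ ℂ T^[n] (hT.iterate n)) f)
    {A : Set X} (hA : MeasurableSet A) :
    FinColorable fun n m => μ (symmDiff (T^[n] ⁻¹' A) (T^[m] ⁻¹' A)) := by
  refine (h (indicatorConstLp 2 hA (measure_ne_top μ A) 1)).of_control fun ε hε => ?_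
  refine ⟨ε ^ (1 / 2 : ℝ), ENNReal.rpow_pos_of_nonneg hε (by norm_num), fun n m hnm => ?_⟩
  have e := edist_compMeasurePreserving_indicatorConstLp ℂ (hT.iterate n) (hT.iterate m) hA 1
    (p := 2) (by norm_num)
  rw [e] at hnm
  simp only [enorm_one, one_mul, ENNReal.toReal_ofNat] at hnm
  exact (ENNReal.rpow_lt_rpow_iff (by norm_num)).1 hnm

lemma finColorable_symmDiff_prod [IsProbabilityMeasure μ] (hT : MeasurePreserving T μ μ)
    (h : ∀ {A : Set X}, MeasurableSet A →
      FinColorable fun n m => μ (symmDiff (T^[n] ⁻¹' A) (T^[m] ⁻¹' A)))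
    {S : Set (X × X)} (hS : MeasurableSet S) :
    FinColorable fun n m => (μ.prod μ) (symmDiff ((Prod.map T^[n] T^[n]) ⁻¹' S)
      ((Prod.map T^[m] T^[m]) ⁻¹' S)) := by
  have hP : ∀ n, MeasurePreserving (Prod.map T^[n] T^[n]) (μ.prod μ) (μ.prod μ) :=
    fun n => (hT.iterate n).prod (hT.iterate n)
  have hunion : ∀ {A B : Set (X × X)},
      FinColorable (fun n m => (μ.prod μ) (symmDiff ((Prod.map T^[n] T^[n]) ⁻¹' A)
        ((Prod.map T^[m] T^[m]) ⁻¹' A))) →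
      FinColorable (fun n m => (μ.prod μ) (symmDiff ((Prod.map T^[n] T^[n]) ⁻¹' B)
        ((Prod.map T^[m] T^[m]) ⁻¹' B))) →
      FinColorable (fun n m => (μ.prod μ) (symmDiff ((Prod.map T^[n] T^[n]) ⁻¹' (A ∪ B))
        ((Prod.map T^[m] T^[m]) ⁻¹' (A ∪ B)))) := fun hA hB =>
    hA.of_le_add hB fun n m => by
      refine (measure_mono ?_).trans (measure_union_le _ _)
      intro x
      simp only [mem_symmDiff, mem_union, mem_preimage]
      tauto
  induction S, hS using MeasurableSpace.induction_on_inter generateFrom_prod.symm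
    isPiSystem_prod with
  | empty => exact .of_eq_zero (by simp)
  | basic S hS =>
    obtain ⟨A, hA, B, hB, rfl⟩ := hS
    refine (h hA).of_le_add (h hB) fun n m => ?_
    have e1 := Measure.prod_prod (μ := μ) (ν := μ) (symmDiff (T^[n] ⁻¹' A) (T^[m] ⁻¹' A)) univ
    have e2 := Measure.prod_prod (μ := μ) (ν := μ) univ (symmDiff (T^[n] ⁻¹' B) (T^[m] ⁻¹' B))
    simp only [measure_univ, mul_one, one_mul] at e1 e2
    rw [← e1, ← e2]
    refine (measure_mono ?_).trans (measure_union_le _ _)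
    intro x
    simp only [mem_symmDiff, mem_union, mem_preimage, mem_prod, Prod.map_fst, Prod.map_snd,
      mem_univ]
    tauto
  | compl S hS ih =>
    refine ih.mono fun n m => ?_
    refine measure_mono fun x => ?_
    simp only [mem_symmDiff, mem_preimage, mem_compl_iff]
    tauto
  | iUnion S hd hS ih =>
    refine .of_approx fun ε hε => ?_
    have hpart : ∀ N : ℕ, FinColorable (fun n m => (μ.prod μ)
        (symmDiff ((Prod.map T^[n] T^[n]) ⁻¹' (⋃ i < N, S i))
        ((Prod.map T^[m] T^[m]) ⁻¹' (⋃ i < N, S i)))) := by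
      intro N
      induction N with
      | zero => exact .of_eq_zero (by simp)
      | succ N ihN =>
        rw [biUnion_lt_succ]
        exact hunion ihN (ih N)
    have hlim : Tendsto (fun N : ℕ => (μ.prod μ) ((⋃ i, S i) \ ⋃ i < N, S i)) atTop (nhds 0) := by
      have hempty : ⋂ N : ℕ, (⋃ i, S i) \ ⋃ i < N, S i = ∅ := by
        ext x
        simp only [mem_iInter, Set.mem_sdiff, mem_iUnion, mem_empty_iff_false, iff_false, not_forall,
          not_and, not_not]
        by_cases hx : ∃ i, x ∈ S i
        · obtain ⟨i, hi⟩ := hx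
          exact ⟨i + 1, fun _ => ⟨i, i.lt_succ_self, hi⟩⟩
        · exact ⟨0, fun hx' => absurd hx' hx⟩
      rw [← measure_empty (μ := μ.prod μ), ← hempty]
      refine tendsto_measure_iInter_atTop (fun N => ?_) (fun a b hab => ?_)
        ⟨0, measure_ne_top _ _⟩
      · exact ((MeasurableSet.iUnion hS).diff
          (MeasurableSet.iUnion fun i => .iUnion fun _ => hS i)).nullMeasurableSet
      · exact sdiff_subset_sdiff_right
          (biUnion_subset_biUnion_left fun i hi => lt_of_lt_of_le hi hab)
    obtain ⟨N, hN⟩ := (hlim.eventually_lt_const (ENNReal.half_pos hε.ne')).exists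
    refine ⟨_, hpart N, fun n m => ?_⟩
    set R := (⋃ i, S i) \ ⋃ i < N, S i with hR
    have hRm : MeasurableSet R := by measurability
    calc _ ≤ (μ.prod μ) (symmDiff ((Prod.map T^[n] T^[n]) ⁻¹' (⋃ i < N, S i))
            ((Prod.map T^[m] T^[m]) ⁻¹' (⋃ i < N, S i)) ∪
            ((Prod.map T^[n] T^[n]) ⁻¹' R ∪ (Prod.map T^[m] T^[m]) ⁻¹' R)) := by
          refine measure_mono fun x => ?_
          have hsub : (⋃ i < N, S i) ⊆ ⋃ i, S i := by
            simp only [iUnion_subset_iff]; intro i _; exact subset_iUnion S i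
          have a1 := @hsub (Prod.map T^[n] T^[n] x)
          have a2 := @hsub (Prod.map T^[m] T^[m] x)
          simp only [mem_symmDiff, mem_union, mem_preimage, hR, Set.mem_sdiff]
          tauto
      _ ≤ _ := (measure_union_le _ _).trans (add_le_add_right (measure_union_le _ _) _)
      _ ≤ _ := by
          rw [(hP n).measure_preimage hRm.nullMeasurableSet,
            (hP m).measure_preimage hRm.nullMeasurableSet]
          gcongr
          exact (add_le_add hN.le hN.le).trans (ENNReal.add_halves ε).le

lemma precompactOrbit_prod [IsProbabilityMeasure μ] (hT : MeasurePreserving T μ μ)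
    (h : ∀ {A : Set X}, MeasurableSet A →
      FinColorable fun n m => μ (symmDiff (T^[n] ⁻¹' A) (T^[m] ⁻¹' A)))
    (f : Lp ℝ 1 (μ.prod μ)) :
    PrecompactOrbit (fun n => Lp.compMeasurePreservingₗᵢ ℝ (Prod.map T^[n] T^[n])
      ((hT.iterate n).prod (hT.iterate n))) f := by
  refine Lp.induction ENNReal.one_ne_top _ (fun c s hs hμs => ?_)
    (fun f g hf hg _ h1 h2 => h1.add h2) isClosed_precompactOrbit f
  refine (finColorable_symmDiff_prod hT h hs).of_le_mul (K := ‖c‖ₑ) (by simp) fun n m => ?_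
  rw [Lp.simpleFunc.coe_indicatorConst]
  refine (edist_compMeasurePreserving_indicatorConstLp ℝ ((hT.iterate n).prod (hT.iterate n))
    ((hT.iterate m).prod (hT.iterate m)) hs c ENNReal.one_ne_top).le.trans ?_
  simp [mul_comm]

lemma tendsto_measure_setOf_le [IsFiniteMeasure μ] {c : X → ℕ} (hc : Measurable c) :
    Tendsto (fun N : ℕ => μ {x | N ≤ c x}) atTop (nhds 0) := by
  have hempty : ⋂ N : ℕ, {x | N ≤ c x} = ∅ := by
    ext x
    simpa using ⟨c x + 1, Nat.lt_succ_self _⟩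
  rw [← measure_empty (μ := μ), ← hempty]
  refine tendsto_measure_iInter_atTop (fun N => ?_) (fun a b hab x hx => hab.trans hx)
    ⟨0, measure_ne_top _ _⟩
  exact (measurableSet_le measurable_const hc).nullMeasurableSet

/-- For every `η > 0`, up to a null set `X` splits into countably many measurable cells of
diameter less than `η`. -/
def HasSmallCells (μ : Measure X) (ρ : X → X → ℝ) : Prop :=
  ∀ η : ℝ, 0 < η → ∃ c : X → ℕ, Measurable c ∧ ∃ S : Set X, MeasurableSet S ∧ μ Sᶜ = 0 ∧
    ∀ x ∈ S, ∀ y ∈ S, c x = c y → ρ x y < η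

lemma Admissible.hasSmallCells (hρ : IsSemimetric ρ) (h : Admissible μ ρ) :
    HasSmallCells μ ρ := by
  classical
  intro η hη
  obtain ⟨hm, S, hS, hS0, D, -, hDc, hD⟩ := h
  rcases D.eq_empty_or_nonempty with rfl | hne
  · exact ⟨fun _ => 0, measurable_const, S, hS, hS0, fun x hx => by simpa using hD x hx 1 one_pos⟩
  obtain ⟨d, rfl⟩ := hDc.exists_eq_range hne
  have hex : ∀ x, ∃ n, ρ x (d n) < η / 2 ∨ x ∉ S := fun x => by
    by_cases hx : x ∈ S
    · obtain ⟨_, ⟨n, rfl⟩, hn⟩ := hD x hx (η / 2) (half_pos hη)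
      exact ⟨n, .inl hn⟩
    · exact ⟨0, .inr hx⟩
  refine ⟨fun x => Nat.find (hex x), measurable_find hex fun n => ?_, S, hS, hS0,
    fun x hx y hy hxy => ?_⟩
  · exact (measurableSet_lt (hm.comp measurable_prodMk_right) measurable_const).union hS.compl
  · have h1 := (Nat.find_spec (hex x)).resolve_right (by simpa using hx)
    have h2 := (Nat.find_spec (hex y)).resolve_right (by simpa using hy)
    simp only at hxy
    rw [← hxy] at h2
    linarith [hρ.2.2.2 x (d (Nat.find (hex x))) y, hρ.2.2.1 (d (Nat.find (hex x))) y]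

lemma HasSmallCells.exists_kernel [IsProbabilityMeasure μ] (h : HasSmallCells μ ρ)
    (hm : Measurable (uncurry ρ))
    (hint : ∫⁻ p, ENNReal.ofReal (ρ p.1 p.2) ∂(μ.prod μ) ≠ ∞) {η : ℝ≥0∞} (hη : 0 < η) :
    ∃ (P : ℕ → Measure X) (i : X → ℕ) (K : ℝ≥0∞), Measurable i ∧ K ≠ ∞ ∧
      (∀ n, IsProbabilityMeasure (P n)) ∧ (∀ x, P (i x) ≤ K • μ) ∧
      ∫⁻ x, ∫⁻ z, ENNReal.ofReal (ρ x z) ∂P (i x) ∂μ ≤ η := by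
  classical
  obtain ⟨r, hr0, hr⟩ := ENNReal.lt_iff_exists_nnreal_btwn.1 (ENNReal.half_pos hη.ne')
  obtain ⟨c, hc, S, hS, hS0, hcS⟩ := h r (by exact_mod_cast hr0)
  set C : ℕ → Set X := fun n => c ⁻¹' {n} with hC
  have hCm : ∀ n, MeasurableSet (C n) := fun n => hc (measurableSet_singleton n)
  have hne : ∃ n₀, μ (C n₀) ≠ 0 := by
    by_contra! h0
    have : μ univ = 0 := by
      rw [← (iUnion_eq_univ_iff.2 fun x => ⟨c x, rfl⟩ : ⋃ n, C n = univ)]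
      exact measure_iUnion_null h0
    simp at this
  obtain ⟨n₀, hn₀⟩ := hne
  set P : ℕ → Measure X := fun n => if μ (C n) = 0 then μ else ProbabilityTheory.cond μ (C n)
    with hP
  set k : ℕ → ℝ≥0∞ := fun n => if μ (C n) = 0 then 1 else (μ (C n))⁻¹ with hk
  have hPk : ∀ n, P n ≤ k n • μ := fun n => by
    simp only [hP, hk]
    split_ifs with h0
    · simp
    · exact Measure.le_iff'.2 fun s => by
        simp only [ProbabilityTheory.cond, Measure.smul_apply, smul_eq_mul]
        gcongr
        exact Measure.restrict_le_self
  have hkt : ∀ n, k n ≠ ∞ := fun n => by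
    simp only [hk]
    split_ifs with h0
    · simp
    · simpa using h0
  have hPp : ∀ n, IsProbabilityMeasure (P n) := fun n => by
    simp only [hP]
    split_ifs with h0
    · infer_instance
    · exact ProbabilityTheory.cond_isProbabilityMeasure h0
  set g : X → ℝ≥0∞ := fun x => ∫⁻ z, ENNReal.ofReal (ρ x z) ∂μ with hg
  have hρm : Measurable fun p : X × X => ENNReal.ofReal (ρ p.1 p.2) := hm.ennreal_ofReal
  have hgm : Measurable g := hρm.lintegral_prod_right'
  have hgint : ∫⁻ x, g x ∂μ ≠ ∞ := by
    rwa [hg, ← lintegral_prod _ hρm.aemeasurable]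
  have htail' : Tendsto (fun N : ℕ => k n₀ * ∫⁻ x in {x | N ≤ c x}, g x ∂μ) atTop (nhds 0) := by
    simpa using ENNReal.Tendsto.const_mul (tendsto_setLIntegral_zero hgint (tendsto_measure_setOf_le hc))
      (.inr (hkt n₀))
  obtain ⟨N, hN⟩ := (htail'.eventually_lt_const (ENNReal.half_pos hη.ne')).exists
  have hNm : MeasurableSet {x | N ≤ c x} := measurableSet_le measurable_const hc
  refine ⟨P, fun x => if c x < N then c x else n₀, ∑ n ∈ Finset.range (N + n₀ + 1), k n,
    Measurable.ite (measurableSet_lt hc measurable_const) hc measurable_const,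
    ENNReal.sum_ne_top.2 fun n _ => hkt n, hPp, fun x => ?_, ?_⟩
  · refine (hPk _).trans (Measure.le_iff'.2 fun s => ?_)
    simp only [Measure.smul_apply, smul_eq_mul]
    gcongr
    refine Finset.single_le_sum (f := k) (fun _ _ => zero_le) (Finset.mem_range.2 ?_)
    split_ifs <;> omega
  have hnull : ∀ᵐ x ∂μ, μ (C (c x)) ≠ 0 := by
    have : μ (⋃ n ∈ {n | μ (C n) = 0}, C n) = 0 :=
      (measure_biUnion_null_iff (to_countable _)).2 fun n hn => hn
    filter_upwards [measure_eq_zero_iff_ae_notMem.1 this] with x hx h0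
    exact hx (mem_biUnion h0 rfl)
  calc _ ≤ ∫⁻ x, (r + {x | N ≤ c x}.indicator (fun x => k n₀ * g x) x) ∂μ := by
        refine lintegral_mono_ae ?_
        filter_upwards [hnull, measure_eq_zero_iff_ae_notMem.1 hS0] with x hx hxS
        rw [mem_compl_iff, not_not] at hxS
        by_cases hxN : c x < N
        · simp only [hxN, if_true]
          refine le_trans ?_ le_self_add
          have hP' : P (c x) = ProbabilityTheory.cond μ (C (c x)) := if_neg hx
          have := hPp (c x)
          calc _ ≤ ∫⁻ _, (r : ℝ≥0∞) ∂P (c x) := by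
                refine lintegral_mono_ae ?_
                have h1 : ∀ᵐ z ∂P (c x), z ∈ C (c x) := by
                  rw [hP']; exact ProbabilityTheory.ae_cond_mem (hCm _)
                have h2 : ∀ᵐ z ∂P (c x), z ∉ Sᶜ := by
                  rw [hP']
                  exact ProbabilityTheory.cond_absolutelyContinuous
                    (measure_eq_zero_iff_ae_notMem.1 hS0)
                filter_upwards [h1, h2] with z hz hzS
                rw [mem_compl_iff, not_not] at hzS
                rw [← ENNReal.ofReal_coe_nnreal]
                exact ENNReal.ofReal_le_ofReal (hcS x hxS z hzS hz.symm).le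
            _ = r := by simp
        · simp only [hxN, if_false]
          rw [indicator_of_mem (by simpa using hxN)]
          refine le_trans ?_ le_add_self
          refine (lintegral_mono' (hPk n₀) le_rfl).trans ?_
          rw [lintegral_smul_measure, smul_eq_mul]
    _ = r + k n₀ * ∫⁻ x in {x | N ≤ c x}, g x ∂μ := by
        rw [lintegral_add_left measurable_const, lintegral_indicator hNm,
          lintegral_const_mul _ hgm]
        simp
    _ ≤ η / 2 + η / 2 := add_le_add hr.le hN.le
    _ = η := ENNReal.add_halves η

/-- A semimetric close in `L¹` to a semimetric `ρ` with small cells is also close to it in the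
m-norm, with a dominating function of the form `f x + f y`. -/
lemma HasSmallCells.exists_dominating [IsProbabilityMeasure μ] (hρ : IsSemimetric ρ)
    (h : HasSmallCells μ ρ) (hm : Measurable (uncurry ρ))
    (hint : ∫⁻ p, ENNReal.ofReal (ρ p.1 p.2) ∂(μ.prod μ) ≠ ∞) {ε : ℝ≥0∞} (hε : 0 < ε) :
    ∃ δ : ℝ≥0∞, 0 < δ ∧ ∀ σ : X → X → ℝ, IsSemimetric σ → Measurable (uncurry σ) →
      L1dist μ σ ρ < δ → ∃ f : X → ℝ≥0∞, Measurable f ∧ ∫⁻ x, f x ∂μ ≤ ε ∧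
        ∀ x y, ENNReal.ofReal |σ x y - ρ x y| ≤ f x + f y := by
  have hε4 : 0 < ε / 2 / 2 := ENNReal.half_pos (ENNReal.half_pos hε.ne').ne'
  obtain ⟨P, i, K, hi, hK, hP, hPK, hη⟩ := h.exists_kernel hm hint hε4
  obtain ⟨δ, hδ0, hδ⟩ := ENNReal.exists_nnreal_pos_mul_lt
    (a := K + K * K) (b := ε / 2) (by finiteness) (ENNReal.half_pos hε.ne').ne'
  refine ⟨δ, by exact_mod_cast hδ0, fun σ hσ hσm hσδ => ?_⟩
  have hRm : Measurable fun p : X × X => ENNReal.ofReal (ρ p.1 p.2) := hm.ennreal_ofReal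
  have hSm : Measurable fun p : X × X => ENNReal.ofReal (σ p.1 p.2) := hσm.ennreal_ofReal
  have hDm : Measurable fun p : X × X => ENNReal.ofReal |σ p.1 p.2 - ρ p.1 p.2| :=
    (measurable_norm.comp (hσm.sub hm)).ennreal_ofReal
  set Q : X × X → ℝ≥0∞ := fun p => ENNReal.ofReal (ρ p.1 p.2) + ENNReal.ofReal (σ p.1 p.2) with hQ
  have hQm : Measurable Q := hRm.add hSm
  set D : X × X → ℝ≥0∞ := fun p => ENNReal.ofReal |σ p.1 p.2 - ρ p.1 p.2| with hD
  have hDl : ∀ x, Measurable fun z => D (x, z) := fun x => hDm.comp measurable_prodMk_left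
  have hDr : ∀ w, Measurable fun z => D (z, w) := fun w => hDm.comp measurable_prodMk_right
  set Δ : ℝ≥0∞ := L1dist μ σ ρ with hΔ
  have hkm : ∀ {q : X × X → ℝ≥0∞}, Measurable q →
      Measurable fun x => ∫⁻ z, q (x, z) ∂P (i x) := fun {q} hq => by
    have : Measurable fun a : ℕ × X => ∫⁻ z, q (a.2, z) ∂P a.1 :=
      measurable_from_prod_countable_right fun n => hq.lintegral_prod_right' (ν := P n)
    exact this.comp (hi.prodMk measurable_id)
  have hDi : ∫⁻ x, ∫⁻ z, D (x, z) ∂P (i x) ∂μ ≤ K * Δ := by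
    calc _ ≤ ∫⁻ x, K * ∫⁻ z, D (x, z) ∂μ ∂μ := by
          refine lintegral_mono fun x => ?_
          refine (lintegral_mono' (hPK x) le_rfl).trans ?_
          rw [lintegral_smul_measure, smul_eq_mul]
      _ = K * Δ := by
          rw [lintegral_const_mul _ hDm.lintegral_prod_right', hΔ, L1dist,
            lintegral_prod _ hDm.aemeasurable]
  refine ⟨fun x => ∫⁻ z, Q (x, z) ∂P (i x) + K * K * Δ, (hkm hQm).add measurable_const, ?_,
    fun x y => ?_⟩
  · calc _ = ∫⁻ x, ∫⁻ z, Q (x, z) ∂P (i x) ∂μ + K * K * Δ := by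
          rw [lintegral_add_right _ measurable_const]; simp
      _ ≤ (∫⁻ x, (∫⁻ z, ENNReal.ofReal (ρ x z) ∂P (i x) + ∫⁻ z, ENNReal.ofReal (ρ x z) ∂P (i x) +
            ∫⁻ z, D (x, z) ∂P (i x)) ∂μ) + K * K * Δ := by
          gcongr with x
          have h1 : Measurable fun z => ENNReal.ofReal (ρ x z) := hRm.comp measurable_prodMk_left
          rw [← lintegral_add_left h1, ← lintegral_add_right _ (hDl x)]
          refine lintegral_mono fun z => ?_
          simp only [hQ, hD]
          rw [add_assoc]
          gcongr
          rw [← ENNReal.ofReal_add (hρ.1 _ _) (abs_nonneg _)]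
          exact ENNReal.ofReal_le_ofReal (by linarith [le_abs_self (σ x z - ρ x z)])
      _ ≤ ε / 2 / 2 + ε / 2 / 2 + K * Δ + K * K * Δ := by
          rw [lintegral_add_right _ (hkm hDm), lintegral_add_right _ (hkm hRm)]
          gcongr
      _ = ε / 2 + Δ * (K + K * K) := by rw [ENNReal.add_halves]; ring
      _ ≤ ε / 2 + ε / 2 := by
          gcongr
          exact (mul_le_mul_left hσδ.le _).trans hδ.le
      _ = ε := ENNReal.add_halves ε
  · have := hP (i x)
    have := hP (i y)
    have hpt : ∀ z w, D (x, y) ≤ Q (x, z) + Q (y, w) + D (z, w) := fun z w => by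
      simp only [hQ, hD]
      rw [← ENNReal.ofReal_add (hρ.1 _ _) (hσ.1 _ _), ← ENNReal.ofReal_add (hρ.1 _ _) (hσ.1 _ _),
        ← ENNReal.ofReal_add (by linarith [hρ.1 x z, hσ.1 x z]) (by linarith [hρ.1 y w, hσ.1 y w]),
        ← ENNReal.ofReal_add (by linarith [hρ.1 x z, hσ.1 x z, hρ.1 y w, hσ.1 y w])
          (abs_nonneg _)]
      refine ENNReal.ofReal_le_ofReal ?_
      obtain ⟨-, -, s1, t1⟩ := hρ
      obtain ⟨-, -, s2, t2⟩ := hσ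
      refine abs_le.2 ⟨?_, ?_⟩
      · linarith [t1 x z y, t1 z w y, s1 w y, t2 z x w, t2 x y w, s2 z x, neg_abs_le (σ z w - ρ z w)]
      · linarith [t2 x z y, t2 z w y, s2 w y, t1 z x w, t1 x y w, s1 z x, le_abs_self (σ z w - ρ z w)]
    have hxm : Measurable fun z => Q (x, z) := hQm.comp measurable_prodMk_left
    have hym : Measurable fun z => Q (y, z) := hQm.comp measurable_prodMk_left
    calc D (x, y) = ∫⁻ _, ∫⁻ _, D (x, y) ∂P (i x) ∂P (i y) := by simp
      _ ≤ ∫⁻ w, ∫⁻ z, (Q (x, z) + Q (y, w) + D (z, w)) ∂P (i x) ∂P (i y) :=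
          lintegral_mono fun w => lintegral_mono fun z => hpt z w
      _ = ∫⁻ z, Q (x, z) ∂P (i x) + ∫⁻ w, Q (y, w) ∂P (i y) +
            ∫⁻ w, ∫⁻ z, D (z, w) ∂P (i x) ∂P (i y) := by
          have e : ∀ w, ∫⁻ z, (Q (x, z) + Q (y, w) + D (z, w)) ∂P (i x) =
              ∫⁻ z, Q (x, z) ∂P (i x) + Q (y, w) + ∫⁻ z, D (z, w) ∂P (i x) := fun w => by
            rw [lintegral_add_right _ (hDr w), lintegral_add_left hxm]
            simp
          simp only [e]
          rw [lintegral_add_right _ hDm.lintegral_prod_left', lintegral_add_left measurable_const]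
          simp
      _ ≤ ∫⁻ z, Q (x, z) ∂P (i x) + ∫⁻ w, Q (y, w) ∂P (i y) + K * K * Δ := by
          gcongr
          calc _ ≤ ∫⁻ w, K * ∫⁻ z, D (z, w) ∂μ ∂P (i y) := by
                refine lintegral_mono fun w => ?_
                refine (lintegral_mono' (hPK x) le_rfl).trans ?_
                rw [lintegral_smul_measure, smul_eq_mul]
            _ ≤ K * ∫⁻ w, K * ∫⁻ z, D (z, w) ∂μ ∂μ := by
                refine (lintegral_mono' (hPK y) le_rfl).trans ?_
                rw [lintegral_smul_measure, smul_eq_mul]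
            _ = K * K * Δ := by
                rw [lintegral_const_mul _ hDm.lintegral_prod_left', hΔ, L1dist,
                  lintegral_prod_symm' _ hDm, mul_assoc]
      _ ≤ _ := by
          rw [add_add_add_comm]
          gcongr
          exact le_self_add

/-- The shift of a function of two variables along `T^n`. -/
def shiftBy (T : X → X) (ρ : X → X → ℝ) (n : ℕ) : X → X → ℝ :=
  fun x y => ρ (T^[n] x) (T^[n] y)

lemma IsSemimetric.shiftBy {X : Type*} {T : X → X} {ρ : X → X → ℝ} (hρ : IsSemimetric ρ)
    (n : ℕ) : IsSemimetric (shiftBy T ρ n) :=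
  ⟨fun _ _ => hρ.1 _ _, fun _ => hρ.2.1 _, fun _ _ => hρ.2.2.1 _ _, fun _ _ _ => hρ.2.2.2 _ _ _⟩

lemma measurable_uncurry_shiftBy (hT : Measurable T) (hm : Measurable (uncurry ρ)) (n : ℕ) :
    Measurable (uncurry (shiftBy T ρ n)) :=
  hm.comp ((hT.iterate n).prodMap (hT.iterate n))

lemma L1dist_shiftBy_add [SFinite μ] (hT : MeasurePreserving T μ μ) (hm : Measurable (uncurry ρ))
    (k m : ℕ) :
    L1dist μ (shiftBy T ρ (k + m)) (shiftBy T ρ m) = L1dist μ (shiftBy T ρ k) ρ := by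
  have h := ((hT.iterate m).prod (hT.iterate m)).lintegral_comp
    (f := fun p => ENNReal.ofReal |shiftBy T ρ k p.1 p.2 - ρ p.1 p.2|)
    (measurable_norm.comp
      ((measurable_uncurry_shiftBy hT.measurable hm k).sub hm)).ennreal_ofReal
  rw [L1dist, L1dist, ← h]
  simp only [shiftBy, iterate_add_apply, Prod.map_fst, Prod.map_snd]

/-- The orbit splits into finitely many classes within which the semimetrics are close,
with a dominating function of the form `f x + f y`. -/
lemma exists_finite_classes [IsProbabilityMeasure μ] (hT : MeasurePreserving T μ μ)
    (hρ : IsSemimetric ρ) (h : HasSmallCells μ ρ) (hm : Measurable (uncurry ρ))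
    (hint : ∫⁻ p, ENNReal.ofReal (ρ p.1 p.2) ∂(μ.prod μ) ≠ ∞)
    (hL : FinColorable fun n m => L1dist μ (shiftBy T ρ n) (shiftBy T ρ m))
    {ε : ℝ≥0∞} (hε : 0 < ε) :
    ∃ c : ℕ → ℕ, (range c).Finite ∧ ∀ n m, c n = c m → ∃ f : X → ℝ≥0∞, Measurable f ∧
      ∫⁻ x, f x ∂μ ≤ ε ∧
      ∀ x y, ENNReal.ofReal |shiftBy T ρ n x y - shiftBy T ρ m x y| ≤ f x + f y := by
  obtain ⟨δ, hδ0, hδ⟩ := h.exists_dominating hρ hm hint hε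
  obtain ⟨c, hc, hcd⟩ := hL δ hδ0
  have key : ∀ k m, L1dist μ (shiftBy T ρ (k + m)) (shiftBy T ρ m) < δ →
      ∃ f : X → ℝ≥0∞, Measurable f ∧ ∫⁻ x, f x ∂μ ≤ ε ∧ ∀ x y,
        ENNReal.ofReal |shiftBy T ρ (k + m) x y - shiftBy T ρ m x y| ≤ f x + f y := by
    intro k m hkm
    rw [L1dist_shiftBy_add hT hm] at hkm
    obtain ⟨f, hf, hfi, hfd⟩ := hδ _ (hρ.shiftBy k)
      (measurable_uncurry_shiftBy hT.measurable hm k) hkm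
    refine ⟨fun x => f (T^[m] x), hf.comp (hT.iterate m).measurable, ?_, fun x y => ?_⟩
    · rwa [(hT.iterate m).lintegral_comp hf]
    · simpa only [shiftBy, iterate_add_apply] using hfd (T^[m] x) (T^[m] y)
  refine ⟨c, hc, fun n m hnm => ?_⟩
  rcases le_total m n with hle | hle
  · obtain ⟨k, rfl⟩ := Nat.exists_eq_add_of_le' hle
    exact key k m (hcd _ _ hnm)
  · obtain ⟨k, rfl⟩ := Nat.exists_eq_add_of_le' hle
    obtain ⟨f, hf, hfi, hfd⟩ := key k n (hcd _ _ hnm.symm)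
    exact ⟨f, hf, hfi, fun x y => by rw [abs_sub_comm]; exact hfd x y⟩

lemma mdist_le_of_dominating [MeasurableEq X] [IsProbabilityMeasure μ] {σ τ : X → X → ℝ}
    (hσ : IsSemimetric σ) (hτ : IsSemimetric τ) {f : X → ℝ≥0∞} (hf : Measurable f)
    (hfi : ∫⁻ x, f x ∂μ ≠ ∞) (hd : ∀ x y, ENNReal.ofReal |σ x y - τ x y| ≤ f x + f y) :
    mdist μ σ τ ≤ 2 * ∫⁻ x, f x ∂μ := by
  classical
  set r : X → X → ℝ := fun x y => if x = y then 0 else (f x).toReal + (f y).toReal with hr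
  have hpos : ∀ x, 0 ≤ (f x).toReal := fun x => ENNReal.toReal_nonneg
  have hrs : IsSemimetric r := by
    refine ⟨fun x y => ?_, fun x => by simp [hr], fun x y => ?_, fun x y z => ?_⟩
    · simp only [hr]; split_ifs
      · exact le_rfl
      · linarith [hpos x, hpos y]
    · simp only [hr, eq_comm (a := x), add_comm]
    · have := hpos x
      have := hpos y
      have := hpos z
      simp only [hr]
      split_ifs <;> subst_vars <;> first | contradiction | linarith
  have hrm : Measurable (uncurry r) :=
    Measurable.ite measurableSet_diagonal measurable_const
      ((hf.ennreal_toReal.comp measurable_fst).add (hf.ennreal_toReal.comp measurable_snd))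
  have hfin : ∀ᵐ x ∂μ, f x < ∞ := ae_lt_top hf hfi
  have hle : mdist μ σ τ ≤ ∫⁻ p, ENNReal.ofReal (r p.1 p.2) ∂(μ.prod μ) := by
    refine sInf_le ⟨r, hrs, hrm, ?_, rfl⟩
    filter_upwards [Measure.quasiMeasurePreserving_fst.ae hfin,
      Measure.quasiMeasurePreserving_snd.ae hfin] with p h1 h2
    by_cases hp : p.1 = p.2
    · simp [hr, hp, hσ.2.1, hτ.2.1]
    · simp only [hr, hp, if_false]
      rw [← ENNReal.toReal_add h1.ne h2.ne]
      exact (ENNReal.ofReal_le_iff_le_toReal (ENNReal.add_lt_top.2 ⟨h1, h2⟩).ne).1 (hd _ _)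
  calc _ ≤ _ := hle
    _ ≤ ∫⁻ p, (f p.1 + f p.2) ∂(μ.prod μ) := by
        refine lintegral_mono fun p => ?_
        simp only [hr]
        split_ifs
        · simp
        · exact ENNReal.ofReal_add_le.trans
            (add_le_add ENNReal.ofReal_toReal_le ENNReal.ofReal_toReal_le)
    _ = 2 * ∫⁻ x, f x ∂μ := by
        have h1 : Measurable fun p : X × X => f p.1 := hf.comp measurable_fst
        rw [lintegral_add_left h1, measurePreserving_fst.lintegral_comp hf,
          measurePreserving_snd.lintegral_comp hf, two_mul]

lemma FinColorable.totallyBoundedIn {X : Type*} {d : (X → X → ℝ) → (X → X → ℝ) → ℝ≥0∞}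
    {u : ℕ → X → X → ℝ} (h : FinColorable fun n m => d (u n) (u m)) :
    TotallyBoundedIn d {σ | ∃ n : ℕ, σ = u n} := by
  intro ε hε
  obtain ⟨c, hc, hcd⟩ := h ε hε
  obtain ⟨s, r, hr⟩ := FinColorable.exists_rep hc
  refine ⟨u '' s, s.finite_toSet.image u, ?_⟩
  rintro _ ⟨n, rfl⟩
  exact ⟨u (r n), mem_image_of_mem u (hr n).1, hcd _ _ (hr n).2.symm⟩

lemma finColorable_L1dist_shiftBy [IsProbabilityMeasure μ] (hT : MeasurePreserving T μ μ)
    (hint : Integrable (uncurry ρ) (μ.prod μ))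
    (h : ∀ f : Lp ℝ 1 (μ.prod μ), PrecompactOrbit (fun n => Lp.compMeasurePreservingₗᵢ ℝ
      (Prod.map T^[n] T^[n]) ((hT.iterate n).prod (hT.iterate n))) f) :
    FinColorable fun n m => L1dist μ (shiftBy T ρ n) (shiftBy T ρ m) := by
  have hL : MemLp (uncurry ρ) 1 (μ.prod μ) := memLp_one_iff_integrable.2 hint
  refine FinColorable.mono (h (hL.toLp _)) fun n m => ?_
  change _ ≤ edist (Lp.compMeasurePreserving _ _ _) (Lp.compMeasurePreserving _ _ _)
  rw [Lp.toLp_compMeasurePreserving, Lp.toLp_compMeasurePreserving, Lp.edist_toLp_toLp,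
    eLpNorm_one_eq_lintegral_enorm, L1dist]
  refine lintegral_mono fun p => ?_
  simp [shiftBy, Real.enorm_eq_ofReal_abs, uncurry]

/-- Finitely many shifts of a semimetric with small cells have common small cells. -/
lemma HasSmallCells.exists_common (h : HasSmallCells μ ρ) (hT : MeasurePreserving T μ μ)
    (s : Finset ℕ) {η : ℝ} (hη : 0 < η) :
    ∃ c : X → ℕ, Measurable c ∧ ∃ S : Set X, MeasurableSet S ∧ μ Sᶜ = 0 ∧
      ∀ x ∈ S, ∀ y ∈ S, c x = c y → ∀ n ∈ s, shiftBy T ρ n x y < η := by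
  obtain ⟨c, hc, S, hS, hS0, hcS⟩ := h η hη
  refine ⟨fun x => Encodable.encode (fun n : s => c (T^[n] x)), ?_, ⋂ n ∈ s, T^[n] ⁻¹' S, ?_, ?_,
    fun x hx y hy hxy n hn => ?_⟩
  · exact (Measurable.of_discrete (f := (Encodable.encode : (s → ℕ) → ℕ))).comp
      (measurable_pi_lambda _ fun n => hc.comp (hT.iterate n).measurable)
  · exact s.measurableSet_biInter fun n _ => (hT.iterate n).measurable hS
  · simp only [compl_iInter]
    refine (measure_biUnion_null_iff s.countable_toSet).2 fun n _ => ?_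
    rw [← preimage_compl, (hT.iterate n).measure_preimage hS.compl.nullMeasurableSet, hS0]
  · have hx' : T^[n] x ∈ S := mem_iInter₂.1 hx n hn
    have hy' : T^[n] y ∈ S := mem_iInter₂.1 hy n hn
    exact hcS _ hx' _ hy' (congrFun (Encodable.encode_injective hxy) ⟨n, hn⟩)

/-- If `ρ` is less than `ε / 3` on cells of a partition up to an error `f x + f y`
with `f` small in `L¹`, then the number of cells bounds the size of an `ε`-cover. -/
lemma isEpsCover_of_cells {σ : X → X → ℝ} {ε : ℝ} (hε : 0 < ε) {c : X → ℕ} (hc : Measurable c)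
    {S : Set X} (hS : MeasurableSet S) (hS0 : μ Sᶜ = 0) {N : ℕ}
    (hN : μ {x | N ≤ c x} < ENNReal.ofReal (ε / 2)) {f : X → ℝ≥0∞} (hf : Measurable f)
    (hfi : ∫⁻ x, f x ∂μ ≤ ENNReal.ofReal (ε / 3) * ENNReal.ofReal (ε / 2))
    (hσ : ∀ x ∈ S, ∀ y ∈ S, c x = c y →
      ENNReal.ofReal (σ x y) ≤ ENNReal.ofReal (ε / 3) + (f x + f y)) :
    IsEpsCover μ σ ε N := by
  have h3 : 0 < ENNReal.ofReal (ε / 3) := by simpa using hε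
  have hNm : MeasurableSet {x | N ≤ c x} := measurableSet_le measurable_const hc
  have hfm : MeasurableSet {x | ENNReal.ofReal (ε / 3) ≤ f x} :=
    measurableSet_le measurable_const hf
  have hmark : μ {x | ENNReal.ofReal (ε / 3) ≤ f x} ≤ ENNReal.ofReal (ε / 2) :=
    (ENNReal.mul_le_mul_iff_right h3.ne' ENNReal.ofReal_ne_top).1
      ((mul_meas_ge_le_lintegral hf _).trans hfi)
  refine ⟨Fin.cases (Sᶜ ∪ {x | N ≤ c x} ∪ {x | ENNReal.ofReal (ε / 3) ≤ f x})
    (fun i : Fin N => {x | c x = i} ∩ S ∩ {x | f x < ENNReal.ofReal (ε / 3)}), ?_, ?_, ?_, ?_⟩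
  · refine Fin.cases ((hS.compl.union hNm).union hfm) fun i => ?_
    exact ((hc (measurableSet_singleton _)).inter hS).inter (measurableSet_lt hf measurable_const)
  · refine iUnion_eq_univ_iff.2 fun x => ?_
    by_cases hx : x ∈ Sᶜ ∪ {x | N ≤ c x} ∪ {x | ENNReal.ofReal (ε / 3) ≤ f x}
    · exact ⟨0, hx⟩
    · simp only [mem_union, mem_compl_iff, mem_ofPred_eq, not_or, not_not, not_le] at hx
      exact ⟨Fin.succ ⟨c x, hx.1.2⟩, ⟨⟨rfl, hx.1.1⟩, hx.2⟩⟩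
  · change μ (Sᶜ ∪ {x | N ≤ c x} ∪ {x | ENNReal.ofReal (ε / 3) ≤ f x}) < _
    calc _ ≤ μ Sᶜ + μ {x | N ≤ c x} + μ {x | ENNReal.ofReal (ε / 3) ≤ f x} :=
          (measure_union_le _ _).trans (add_le_add_left (measure_union_le _ _) _)
      _ < ENNReal.ofReal (ε / 2) + ENNReal.ofReal (ε / 2) := by
          rw [hS0, zero_add]
          exact ENNReal.add_lt_add_of_lt_of_le (hmark.trans_lt ENNReal.ofReal_lt_top).ne hN hmark
      _ = ENNReal.ofReal ε := by
          rw [← ENNReal.ofReal_add (by positivity) (by positivity), add_halves]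
  · refine Fin.cases (fun h => absurd rfl h) fun i _ x hx y hy => ?_
    obtain ⟨⟨hxc, hxS⟩, hxf⟩ := hx
    obtain ⟨⟨hyc, hyS⟩, hyf⟩ := hy
    refine (ENNReal.ofReal_lt_ofReal_iff hε).1 ?_
    calc _ ≤ ENNReal.ofReal (ε / 3) + (f x + f y) := hσ x hxS y hyS (hxc.trans hyc.symm)
      _ < ENNReal.ofReal (ε / 3) + (ENNReal.ofReal (ε / 3) + ENNReal.ofReal (ε / 3)) :=
          ENNReal.add_lt_add_left ENNReal.ofReal_ne_top (ENNReal.add_lt_add hxf hyf)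
      _ = ENNReal.ofReal ε := by
          rw [← ENNReal.ofReal_add (by positivity) (by positivity),
            ← ENNReal.ofReal_add (by positivity) (by positivity)]
          ring_nf

lemma exists_isEpsCover_convex_combination [IsProbabilityMeasure μ]
    (hT : MeasurePreserving T μ μ) (h : HasSmallCells μ ρ)
    (hcl : ∀ {ε : ℝ≥0∞}, 0 < ε → ∃ c : ℕ → ℕ, (range c).Finite ∧ ∀ n m, c n = c m →
      ∃ f : X → ℝ≥0∞, Measurable f ∧ ∫⁻ x, f x ∂μ ≤ ε ∧
      ∀ x y, ENNReal.ofReal |shiftBy T ρ n x y - shiftBy T ρ m x y| ≤ f x + f y)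
    {ε : ℝ} (hε : 0 < ε) :
    ∃ N : ℕ, ∀ (m : ℕ) (w : Fin m → ℝ) (j : Fin m → ℕ), (∀ i, 0 ≤ w i) → (∑ i, w i) = 1 →
      IsEpsCover μ (fun x y => ∑ i, w i * shiftBy T ρ (j i) x y) ε N := by
  have hε' : 0 < ENNReal.ofReal (ε / 3) * ENNReal.ofReal (ε / 2) := by
    rw [← ENNReal.ofReal_mul (by positivity), ENNReal.ofReal_pos]; positivity
  obtain ⟨c, hc, hcf⟩ := hcl hε'
  obtain ⟨s, r, hr⟩ := FinColorable.exists_rep hc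
  choose f hf hfi hfd using fun n => hcf n (r n) (hr n).2.symm
  obtain ⟨b, hb, S, hS, hS0, hbS⟩ := h.exists_common hT s (η := ε / 3) (by positivity)
  obtain ⟨N, hN⟩ := ((tendsto_measure_setOf_le (μ := μ) hb).eventually_lt_const
    (ENNReal.ofReal_pos.2 (half_pos hε))).exists
  refine ⟨N, fun m w j hw hw1 => ?_⟩
  have hw1' : ∑ i, ENNReal.ofReal (w i) = 1 := by
    rw [← ENNReal.ofReal_sum_of_nonneg fun i _ => hw i, hw1, ENNReal.ofReal_one]
  refine isEpsCover_of_cells hε hb hS hS0 hN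
    (f := fun x => ∑ i, ENNReal.ofReal (w i) * f (j i) x)
    (Finset.measurable_fun_sum _ fun i _ => (hf (j i)).const_mul _) ?_
    fun x hx y hy hxy => ?_
  · rw [lintegral_finsetSum _ fun i _ => (hf (j i)).const_mul _]
    calc _ ≤ ∑ i, ENNReal.ofReal (w i) * (ENNReal.ofReal (ε / 3) * ENNReal.ofReal (ε / 2)) := by
          refine Finset.sum_le_sum fun i _ => ?_
          rw [lintegral_const_mul _ (hf (j i))]
          gcongr
          exact hfi (j i)
      _ = _ := by rw [← Finset.sum_mul, hw1', one_mul]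
  · calc _ ≤ ∑ i, ENNReal.ofReal (w i * shiftBy T ρ (j i) x y) :=
          Finset.le_sum_of_subadditive _ ENNReal.ofReal_zero.le
            (fun _ _ => ENNReal.ofReal_add_le) _ _
      _ ≤ ∑ i, ENNReal.ofReal (w i) * (ENNReal.ofReal (ε / 3) + (f (j i) x + f (j i) y)) := by
          refine Finset.sum_le_sum fun i _ => ?_
          rw [ENNReal.ofReal_mul (hw i)]
          gcongr
          refine le_trans ?_ (add_le_add_right (hfd (j i) x y) _)
          rw [← ENNReal.ofReal_add (by positivity) (abs_nonneg _)]
          refine ENNReal.ofReal_le_ofReal ?_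
          linarith [hbS x hx y hy hxy _ (hr (j i)).1,
            le_abs_self (shiftBy T ρ (j i) x y - shiftBy T ρ (r (j i)) x y)]
      _ = _ := by
          simp only [mul_add, Finset.sum_add_distrib]
          rw [← Finset.sum_mul, hw1', one_mul]

end

/-- if an invertible measure-preserving transformation `T` of a standard
probability space has purely discrete spectrum, then for every admissible summable
semimetric `ρ` the orbit `{ρ_n : n ∈ ℕ}` with `ρ_n(x,y) = ρ(T^n x, T^n y)` is precompact
in `L¹(X×X, μ×μ)`, hence also in the m-norm; moreover, for every `ε > 0` the
`ε`-entropies of all finite convex combinations of semimetrics in this orbit are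
uniformly bounded. -/
theorem statement18 {X : Type*} [MeasurableSpace X] [StandardBorelSpace X]
    (μ : Measure X) [IsProbabilityMeasure μ] (T : X → X)
    (hT : MeasurePreserving T μ μ) (hbij : Function.Bijective T)
    (hspec : Dense ((Submodule.span ℂ
      {f : Lp ℂ 2 μ | ∃ c : ℂ, ∀ᵐ x ∂μ, f (T x) = c * f x} :
        Submodule ℂ (Lp ℂ 2 μ)) : Set (Lp ℂ 2 μ)))
    (ρ : X → X → ℝ) (hρ : IsSemimetric ρ) (hadm : Admissible μ ρ)
    (hint : Integrable (Function.uncurry ρ) (μ.prod μ)) :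
    TotallyBoundedIn (L1dist μ) {σ | ∃ n : ℕ, σ = fun x y => ρ (T^[n] x) (T^[n] y)} ∧
    TotallyBoundedIn (mdist μ) {σ | ∃ n : ℕ, σ = fun x y => ρ (T^[n] x) (T^[n] y)} ∧
    ∀ ε : ℝ, 0 < ε → ∃ C : ℝ≥0∞, C ≠ ∞ ∧
      ∀ (m : ℕ) (w : Fin m → ℝ) (j : Fin m → ℕ),
        (∀ i, 0 ≤ w i) → (∑ i, w i) = 1 →
        epsEntropy μ (fun x y => ∑ i, w i * ρ (T^[j i] x) (T^[j i] y)) ε ≤ C := by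
  have hset : ∀ {A : Set X}, MeasurableSet A →
      FinColorable fun n m => μ (symmDiff (T^[n] ⁻¹' A) (T^[m] ⁻¹' A)) := fun hA =>
    finColorable_symmDiff hT (precompactOrbit_of_dense_span hspec
      fun f ⟨c, hf⟩ => precompactOrbit_of_eigenfunction hT hf) hA
  have hL := finColorable_L1dist_shiftBy hT hint (precompactOrbit_prod hT hset)
  have hm := hadm.1
  have hcells := hadm.hasSmallCells hρ
  have hfin : ∫⁻ p, ENNReal.ofReal (ρ p.1 p.2) ∂(μ.prod μ) ≠ ∞ :=
    (hint.lintegral_lt_top).ne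
  have hcl := fun {ε : ℝ≥0∞} (hε : 0 < ε) =>
    exists_finite_classes hT hρ hcells hm hfin hL hε
  refine ⟨hL.totallyBoundedIn, ?_, fun ε hε => ?_⟩
  · refine FinColorable.totallyBoundedIn (u := shiftBy T ρ) fun ε hε => ?_
    obtain ⟨δ, hδ0, hδ⟩ := exists_between (ENNReal.half_pos hε.ne')
    obtain ⟨c, hc, hcf⟩ := hcl hδ0
    refine ⟨c, hc, fun n m hnm => ?_⟩
    obtain ⟨f, hf, hfi, hfd⟩ := hcf n m hnm
    have hfδ := hfi.trans_lt hδ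
    calc mdist μ (shiftBy T ρ n) (shiftBy T ρ m) ≤ 2 * ∫⁻ x, f x ∂μ :=
          mdist_le_of_dominating (hρ.shiftBy n) (hρ.shiftBy m) hf hfδ.ne_top hfd
      _ < ε := by
          rw [two_mul, ← ENNReal.add_halves ε]
          exact ENNReal.add_lt_add hfδ hfδ
  · obtain ⟨N, hN⟩ := exists_isEpsCover_convex_combination hT hcells hcl hε
    exact ⟨ENNReal.ofReal (Real.logb 2 N), ENNReal.ofReal_ne_top, fun m w j hw hw1 =>
      sInf_le ⟨N, hN m w j hw hw1, rfl⟩⟩
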